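/- For every integer l > 1 and every integer a with a ≢ 0 (mod l), the function s_{a,l} is a modular form of weight 1 for Γ₁(l): it is holomorphic on ℍ, satisfies s_{a,l}((pτ+q)/(rτ+t)) = (rτ+t)·s_{a,l}(τ) for all (p q; r t) ∈ Γ₁(l) and all τ ∈ ℍ, and for every γ = (p q; r t) ∈ SL₂(ℤ) the function (rτ+t)^{−1}·s_{a,l}(γ·τ) is bounded as Im τ → ∞. -/

import Mathlib

open scoped BigOperators
open UpperHalfPlane

/-- The weight one Eisenstein series
`s_{a,m}(τ) = (1/2 − {a/m}) + Σ_{n≥1} q^n Σ_{d∣n} (δ_{d≡a (m)} − δ_{d≡−a (m)})`,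
set to `0` when `a ≡ 0 (mod m)`. -/
noncomputable def sE (m : ℕ) (a : ℤ) (τ : ℍ) : ℂ :=
  if (a : ZMod m) = 0 then 0
  else
    (((1 : ℝ) / 2 - Int.fract ((a : ℝ) / (m : ℝ)) : ℝ) : ℂ) +
      ∑' n : ℕ,
        Complex.exp (2 * Real.pi * Complex.I * (n : ℂ) * (τ : ℂ)) *
          (∑ d ∈ Nat.divisors n,
            ((if ((d : ℤ) : ZMod m) = (a : ZMod m) then (1 : ℂ) else 0) -
              (if ((d : ℤ) : ZMod m) = (-(a : ZMod m)) then (1 : ℂ) else 0)))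

/-!
Up to a constant and the substitution `τ ↦ l τ`, the function `s_{a,l}` is the weight one Eisenstein
series that Hecke attached to an `l`-torsion point `z` of `ℂ / (ℤ τ + ℤ)`: the value `l ζ(z)` of the
Weierstrass zeta function, corrected by a quasi-period. The correction is built in by using instead
`c ζ(z) - ζ(c z)` with `c = l + 1`. Its lattice series converges absolutely, so that its weight one
transformation law under `SL₂(ℤ)`, which moves the torsion point, is a mere reindexing. Summing the
same series by rows gives a series of cotangents. It shows that only the class of the torsion point
matters and that the function is bounded at `i∞`, hence at every cusp, and expanding the cotangents
in powers of `q` gives a Lambert series, which is the Fourier expansion defining `s_{a,l}`.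
-/

open Complex Filter Topology Asymptotics SummationFilter
open scoped Manifold MatrixGroups ModularForm Real

section SymmetricSums

variable {M : Type*} [AddCommGroup M]

lemma sum_Icc_neg_add_one_sub (f : ℤ → M) (N : ℕ) :
    ∑ m ∈ Finset.Icc (-(N : ℤ)) N, (f (m + 1) - f m) = f (N + 1) - f (-N) := by
  induction N with
  | zero => simp
  | succ N ih =>
    have := Finset.sum_Icc_succ_eq_add_endpoints (fun m ↦ f (m + 1) - f m) (N := N)
    push_cast at this ⊢
    rw [this, ih, neg_add, neg_add_cancel_right]
    abel

variable [TopologicalSpace M]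

lemma hasSum_symmetricIcc_of_odd [IsAddTorsionFree M] {f : ℤ → M} (hf : f.Odd) :
    HasSum f 0 (symmetricIcc ℤ) := by
  refine (hasSum_symmetricIcc_iff ..).mpr (tendsto_const_nhds.congr fun N ↦ ?_)
  refine (hf.finsetSum_eq_zero <| Finset.ext fun n ↦ ?_).symm
  rw [Finset.mem_map_equiv, Equiv.neg_symm, Equiv.neg_apply]
  grind

lemma hasSum_symmetricIcc_add_sub [IsTopologicalAddGroup M] {f : ℤ → M} {α β : M}
    (hα : Tendsto f atTop (𝓝 α)) (hβ : Tendsto f atBot (𝓝 β)) (u : ℤ) :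
    HasSum (fun m ↦ f (m + u) - f m) (u • (α - β)) (symmetricIcc ℤ) := by
  have consecutive (u : ℤ) :
      HasSum (fun m ↦ f (m + (u + 1)) - f (m + u)) (α - β) (symmetricIcc ℤ) := by
    have telescope (N : ℕ) := sum_Icc_neg_add_one_sub (fun m ↦ f (m + u)) N
    simp only [add_assoc, add_comm (1 : ℤ) u] at telescope
    simp only [hasSum_symmetricIcc_iff, telescope]
    have hN : Tendsto (fun N : ℕ ↦ (N : ℤ)) atTop atTop := tendsto_natCast_atTop_atTop
    exact (hα.comp (tendsto_atTop_add_const_right _ (u + 1) hN)).sub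
      (hβ.comp (tendsto_atBot_add_const_right _ u (tendsto_neg_atTop_atBot.comp hN)))
  induction u using Int.induction_on with
  | zero => simp
  | succ u ih =>
    simpa only [add_comm, sub_add_sub_cancel', add_smul, one_smul] using ih.add (consecutive u)
  | pred u ih =>
    simpa only [sub_add_cancel, sub_sub_sub_cancel_left, sub_smul, one_smul] using
      ih.sub (consecutive (-u - 1))

end SymmetricSums

/-- The function `π cot (π x)`. Since `Complex.cot` is a quotient, it takes the value `0` at the
integers, where the true function has poles. -/
noncomputable def piCotPi (x : ℂ) : ℂ := π * cot (π * x)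

lemma piCotPi_odd : piCotPi.Odd := fun x ↦ by
  simp [piCotPi, cot, div_neg]

lemma piCotPi_zero : piCotPi 0 = 0 := piCotPi_odd.map_zero

lemma piCotPi_add_intCast (x : ℂ) (n : ℤ) : piCotPi (x + n) = piCotPi x := by
  have exp_add_intCast : cexp (2 * π * Complex.I * (x + n)) = cexp (2 * π * Complex.I * x) := by
    rw [mul_add, mul_comm _ (n : ℂ), exp_add, exp_int_mul_two_pi_mul_I, mul_one]
  simp only [piCotPi, cot_pi_eq_exp_ratio, exp_add_intCast]

lemma hasSum_inv_add_intCast_of_mem_integerComplement {x : ℂ} (hx : x ∈ integerComplement) :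
    HasSum (fun n : ℤ ↦ (x + n)⁻¹) (piCotPi x) (symmetricIcc ℤ) := by
  have cot_sum := (summable_cotTerm hx).hasSum.tendsto_sum_nat.const_add (1 / x)
  rw [← cot_series_rep' hx, add_sub_cancel] at cot_sum
  refine (hasSum_symmetricIcc_iff ..).mpr (cot_sum.congr fun N ↦ ?_)
  induction N with
  | zero => simp
  | succ N ih =>
    rw [Finset.sum_range_succ, ← add_assoc, ih]
    have := Finset.sum_Icc_succ_eq_add_endpoints (fun n : ℤ ↦ (x + n)⁻¹) (N := N)
    push_cast at this ⊢
    rw [this, cotTerm]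
    ring

lemma hasSum_inv_intCast_add_intCast (k : ℤ) :
    HasSum (fun n : ℤ ↦ ((k : ℂ) + n)⁻¹) 0 (symmetricIcc ℤ) := by
  have odd_inv : HasSum (fun n : ℤ ↦ (n : ℂ)⁻¹) 0 (symmetricIcc ℤ) :=
    hasSum_symmetricIcc_of_odd fun n ↦ by rw [Int.cast_neg, inv_neg]
  have inv_tendsto : Tendsto (fun n : ℤ ↦ (n : ℂ)⁻¹) (atBot ⊔ atTop) (𝓝 0) :=
    tendsto_inv₀_cobounded.comp tendsto_intCast_atBot_sup_atTop_cobounded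
  rw [tendsto_sup] at inv_tendsto
  simpa [add_comm] using
    odd_inv.add (hasSum_symmetricIcc_add_sub inv_tendsto.2 inv_tendsto.1 k)

lemma hasSum_inv_add_intCast (x : ℂ) :
    HasSum (fun n : ℤ ↦ (x + n)⁻¹) (piCotPi x) (symmetricIcc ℤ) := by
  by_cases hx : x ∈ integerComplement
  · exact hasSum_inv_add_intCast_of_mem_integerComplement hx
  · obtain ⟨k, rfl⟩ := not_not.mp hx
    rw [← zero_add (k : ℂ), piCotPi_add_intCast, piCotPi_zero, zero_add]
    exact hasSum_inv_intCast_add_intCast k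

lemma norm_exp_two_pi_I_mul (x : ℂ) :
    ‖cexp (2 * π * Complex.I * x)‖ = Real.exp (-(2 * π * x.im)) := by
  simp [norm_exp]

lemma exp_two_pi_I_mul_ne_one {x : ℂ} (hx : x.im ≠ 0) :
    cexp (2 * π * Complex.I * x) ≠ 1 := fun h ↦ by
  have := norm_exp_two_pi_I_mul x
  simp [h, hx, Real.pi_ne_zero, eq_comm (a := (1 : ℝ))] at this

lemma piCotPi_eq {x : ℂ} (hx : x.im ≠ 0) :
    piCotPi x = -(π * Complex.I) - 2 * π * Complex.I *
      (cexp (2 * π * Complex.I * x) / (1 - cexp (2 * π * Complex.I * x))) := by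
  have h := sub_ne_zero.mpr (exp_two_pi_I_mul_ne_one hx).symm
  rw [piCotPi, cot_pi_eq_exp_ratio]
  generalize cexp (2 * π * Complex.I * x) = q at *
  field_simp [I_ne_zero]
  linear_combination (1 + q) * I_sq

lemma norm_div_one_sub_le {q : ℂ} {t : ℝ} (ht : 0 < t) (hq : ‖q‖ = Real.exp (-t)) :
    ‖q / (1 - q)‖ ≤ 2 / t ^ 2 := by
  have hpos : 0 < 1 - Real.exp (-t) := by simpa using ht
  have hexp : 1 + t + t ^ 2 / 2 ≤ Real.exp t := Real.quadratic_le_exp_of_nonneg ht.le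
  calc ‖q / (1 - q)‖ ≤ Real.exp (-t) / (1 - Real.exp (-t)) := by
        rw [norm_div, hq]
        gcongr
        simpa [hq] using norm_sub_norm_le 1 q
    _ = 1 / (Real.exp t - 1) := by
        rw [Real.exp_neg] at hpos ⊢
        field_simp
    _ ≤ 1 / (t ^ 2 / 2) := by gcongr; linarith
    _ = 2 / t ^ 2 := by field_simp

lemma norm_piCotPi_add_le_of_pos {x : ℂ} (hx : 0 < x.im) :
    ‖piCotPi x + π * Complex.I‖ ≤ 1 / (π * x.im ^ 2) := by
  have hpi := Real.pi_pos
  rw [piCotPi_eq hx.ne', sub_add_eq_add_sub, neg_add_cancel, zero_sub, norm_neg, norm_mul]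
  calc _ ≤ ‖(2 * π * Complex.I : ℂ)‖ * (2 / (2 * π * x.im) ^ 2) := by
        gcongr
        exact norm_div_one_sub_le (by positivity) (norm_exp_two_pi_I_mul x)
    _ = 1 / (π * x.im ^ 2) := by
        simp only [norm_mul, norm_ofNat, norm_real, norm_I, Real.norm_of_nonneg hpi.le]
        field_simp

lemma norm_piCotPi_add_sign_le {x : ℂ} (hx : x.im ≠ 0) :
    ‖piCotPi x + SignType.sign x.im * (π * Complex.I)‖ ≤ 1 / (π * x.im ^ 2) := by
  rcases hx.lt_or_gt with hneg | hpos
  · have := norm_piCotPi_add_le_of_pos (x := -x) (by simpa using hneg)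
    rw [piCotPi_odd, ← sub_eq_neg_add, norm_sub_rev] at this
    simpa [sign_neg hneg, sub_eq_add_neg] using this
  · simpa [sign_pos hpos] using norm_piCotPi_add_le_of_pos hpos

lemma tendsto_piCotPi_add_mul_atTop (z : ℂ) (τ : ℍ) :
    Tendsto (fun m : ℤ ↦ piCotPi (z + m * τ)) atTop (𝓝 (-(π * Complex.I))) := by
  have im_tendsto : Tendsto (fun m : ℤ ↦ (z + m * τ : ℂ).im) atTop atTop := by
    simpa using tendsto_atTop_add_const_left _ z.im
      (tendsto_intCast_atTop_atTop.atTop_mul_const τ.im_pos)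
  have error_tendsto :
      Tendsto (fun m : ℤ ↦ 1 / (π * (z + m * τ : ℂ).im ^ 2)) atTop (𝓝 0) :=
    tendsto_const_nhds.div_atTop <|
      ((tendsto_pow_atTop two_ne_zero).comp im_tendsto).const_mul_atTop Real.pi_pos
  refine tendsto_iff_norm_sub_tendsto_zero.mpr <| squeeze_zero' (.of_forall fun _ ↦ norm_nonneg _)
    ?_ error_tendsto
  filter_upwards [im_tendsto.eventually_gt_atTop 0] with m hm
  simpa only [sub_neg_eq_add] using norm_piCotPi_add_le_of_pos hm

lemma tendsto_piCotPi_add_mul_atBot (z : ℂ) (τ : ℍ) :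
    Tendsto (fun m : ℤ ↦ piCotPi (z + m * τ)) atBot (𝓝 (π * Complex.I)) := by
  have := ((tendsto_piCotPi_add_mul_atTop (-z) τ).comp tendsto_neg_atBot_atTop).neg
  simpa [Function.comp_def, ← piCotPi_odd _, add_comm] using this

section ZetaDefect

/-- The complex number `v₀ τ + v₁` of the lattice `ℤ τ + ℤ`. -/
noncomputable def latticePoint (τ : ℂ) (v : Fin 2 → ℤ) : ℂ := v 0 * τ + v 1

/-- The contribution of the lattice point `ω` to `c ζ(z) - ζ(c z)`, where `ζ` is the Weierstrass
zeta function. Fractions with vanishing denominator contribute `0`. -/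
noncomputable def zetaDefectTerm (c z ω : ℂ) : ℂ := c * (z + ω)⁻¹ - (c * z + ω)⁻¹ - (c - 1) * ω⁻¹

/-- The defect `c ζ(z) - ζ(c z)` of linearity of the Weierstrass zeta function of the lattice
`ℤ τ + ℤ`, as an absolutely convergent series over the lattice. -/
noncomputable def zetaDefect (c z τ : ℂ) : ℂ :=
  ∑' v : Fin 2 → ℤ, zetaDefectTerm c z (latticePoint τ v)

lemma zetaDefectTerm_mul (c z ω k : ℂ) :
    zetaDefectTerm c (k * z) (k * ω) = k⁻¹ * zetaDefectTerm c z ω := by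
  simp only [zetaDefectTerm, mul_left_comm c k, ← mul_add, mul_inv]
  ring

lemma zetaDefectTerm_eq {c z ω : ℂ} (hω : ω ≠ 0) (hz : z + ω ≠ 0) (hcz : c * z + ω ≠ 0) :
    zetaDefectTerm c z ω = -(c * (c - 1) * z ^ 2) * (ω⁻¹ * (z + ω)⁻¹ * (c * z + ω)⁻¹) := by
  rw [zetaDefectTerm]
  field_simp
  ring

lemma isLittleO_const_norm_cofinite (x : ℂ) :
    (fun _ : Fin 2 → ℤ ↦ x) =o[cofinite] fun v ↦ ‖v‖ := by
  simpa [isLittleO_const_left, Function.comp_def] using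
    .inr <| tendsto_norm_comp_cofinite_atTop_of_isClosedEmbedding (E := Fin 2 → ℤ) .id

lemma norm_isBigO_latticePoint (τ : ℍ) :
    (fun v : Fin 2 → ℤ ↦ ‖v‖) =O[cofinite] latticePoint τ := by
  refine .of_bound (EisensteinSeries.r τ)⁻¹ (.of_forall fun v ↦ ?_)
  have hr := EisensteinSeries.r_pos τ
  rw [norm_norm, le_inv_mul_iff₀ hr]
  rcases eq_or_ne v 0 with rfl | hv
  · simp
  · exact EisensteinSeries.r_mul_max_le τ hv

lemma norm_isBigO_add_latticePoint (x : ℂ) (τ : ℍ) :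
    (fun v : Fin 2 → ℤ ↦ ‖v‖) =O[cofinite] fun v ↦ x + latticePoint τ v :=
  have h := norm_isBigO_latticePoint τ
  h.trans ((isLittleO_const_norm_cofinite x).trans_isBigO h).right_isBigO_add

lemma eventually_add_latticePoint_ne_zero (x : ℂ) (τ : ℍ) :
    ∀ᶠ v in cofinite, x + latticePoint τ v ≠ 0 := by
  filter_upwards [(norm_isBigO_add_latticePoint x τ).eq_zero_imp, eventually_cofinite_ne 0]
    with v h hv h0
  exact hv (norm_eq_zero.mp (h h0))

lemma inv_add_latticePoint_isBigO (x : ℂ) (τ : ℍ) :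
    (fun v ↦ (x + latticePoint τ v)⁻¹) =O[cofinite] fun v ↦ ‖v‖⁻¹ := by
  refine (norm_isBigO_add_latticePoint x τ).inv_rev ?_
  filter_upwards [eventually_cofinite_ne 0] with v hv h
  exact absurd (norm_eq_zero.mp h) hv

lemma summable_zetaDefectTerm (c z : ℂ) (τ : ℍ) :
    Summable fun v ↦ zetaDefectTerm c z (latticePoint τ v) := by
  refine EisensteinSeries.summable_of_isBigO_rpow_norm (a := 3) (by norm_num) ?_
  have cubic := ((inv_add_latticePoint_isBigO 0 τ).mul (inv_add_latticePoint_isBigO z τ)).mul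
    (inv_add_latticePoint_isBigO (c * z) τ) |>.const_mul_left (-(c * (c - 1) * z ^ 2))
  refine cubic.congr' ?_ (.of_forall fun v ↦ ?_)
  · filter_upwards [eventually_add_latticePoint_ne_zero 0 τ,
      eventually_add_latticePoint_ne_zero z τ, eventually_add_latticePoint_ne_zero (c * z) τ]
      with v hω hz hcz
    rw [zero_add] at hω
    rw [zetaDefectTerm_eq hω hz hcz, zero_add]
  · norm_cast
    ring

lemma latticePoint_specialLinearGroup_smul (γ : SL(2, ℤ)) (τ : ℍ) (v : Fin 2 → ℤ) :
    latticePoint (γ • τ : ℍ) v = (denom γ τ)⁻¹ * latticePoint τ (Matrix.vecMul v γ) := by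
  have hd := denom_ne_zero γ τ
  have hdenom : denom γ τ = γ 1 0 * τ + γ 1 1 := by simp [denom]
  rw [hdenom] at hd ⊢
  rw [latticePoint, coe_specialLinearGroup_apply, eq_inv_mul_iff_mul_eq₀ hd]
  simp only [latticePoint, Matrix.vecMul, Matrix.vec2_dotProduct, eq_intCast, ofReal_intCast]
  field_simp
  push_cast
  ring

lemma zetaDefect_specialLinearGroup_smul (c z : ℂ) (γ : SL(2, ℤ)) (τ : ℍ) :
    zetaDefect c ((denom γ τ)⁻¹ * z) (γ • τ : ℍ) = denom γ τ * zetaDefect c z τ := by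
  have hγ : γ.1 * γ⁻¹.1 = 1 ∧ γ⁻¹.1 * γ.1 = 1 := by
    simp only [← Matrix.SpecialLinearGroup.coe_mul, mul_inv_cancel, inv_mul_cancel,
      Matrix.SpecialLinearGroup.coe_one, and_self]
  have reindex := (Matrix.toLinearEquivRight'OfInv hγ.2 hγ.1).toEquiv.tsum_eq
    fun v ↦ zetaDefectTerm c z (latticePoint τ v)
  simp only [zetaDefect, latticePoint_specialLinearGroup_smul, zetaDefectTerm_mul, inv_inv,
    tsum_mul_left]
  exact congrArg (denom γ τ * ·) reindex

lemma hasSum_zetaDefectTerm_row (c z x : ℂ) :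
    HasSum (fun n : ℤ ↦ zetaDefectTerm c z (x + n))
      (c * piCotPi (z + x) - piCotPi (c * z + x) - (c - 1) * piCotPi x) (symmetricIcc ℤ) := by
  simp only [zetaDefectTerm, ← add_assoc]
  exact (((hasSum_inv_add_intCast _).mul_left c).sub (hasSum_inv_add_intCast _)).sub
    ((hasSum_inv_add_intCast x).mul_left (c - 1))

lemma hasSum_zetaDefect (c z : ℂ) (τ : ℍ) :
    HasSum (fun m : ℤ ↦ c * piCotPi (z + m * τ) - piCotPi (c * z + m * τ) -
      (c - 1) * piCotPi (m * τ)) (zetaDefect c z τ) := by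
  have total := (finTwoArrowEquiv ℤ).symm.hasSum_iff.mpr (summable_zetaDefectTerm c z τ).hasSum
  refine total.prod_fiberwise fun m ↦ ?_
  have row := (total.summable.prod_factor m).hasSum
  simp only [Function.comp_apply, finTwoArrowEquiv_symm_apply, latticePoint, Matrix.cons_val_zero,
    Matrix.cons_val_one, Matrix.cons_val_fin_one] at row ⊢
  rwa [← HasSum.unique (row.mono_left le_atTop) (hasSum_zetaDefectTerm_row c z (m * τ))]

end ZetaDefect

section HeckeEisenstein

/-- Hecke's weight one Eisenstein series attached to the torsion point `z = (v₀ τ + v₁) / l` of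
`ℂ / (ℤ τ + ℤ)`, up to normalisation. As `(l + 1) z` and `z` differ by the period `v₀ τ + v₁`, the
defect `(l + 1) ζ(z) - ζ((l + 1) z)` equals `l ζ(z)` minus the quasi-period of `v₀ τ + v₁`. -/
noncomputable def heckeEisenstein (l : ℕ) (v : Fin 2 → ℤ) (τ : ℍ) : ℂ :=
  zetaDefect (l + 1) (latticePoint τ v / l) τ

lemma heckeEisenstein_slash (l : ℕ) (v : Fin 2 → ℤ) (γ : SL(2, ℤ)) :
    heckeEisenstein l v ∣[(1 : ℤ)] γ = heckeEisenstein l (Matrix.vecMul v γ) := by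
  ext τ
  rw [ModularForm.SL_slash_apply, heckeEisenstein, latticePoint_specialLinearGroup_smul,
    mul_div_assoc, zetaDefect_specialLinearGroup_smul, zpow_neg_one, mul_right_comm,
    mul_inv_cancel₀ (denom_ne_zero γ τ), one_mul, heckeEisenstein]

lemma hasSum_piCotPi_add_mul_sub (z : ℂ) (τ : ℍ) (u : ℤ) :
    HasSum (fun m : ℤ ↦ piCotPi (z + (m + u : ℤ) * τ) - piCotPi (z + m * τ))
      (-(2 * π * Complex.I * u)) (symmetricIcc ℤ) := by
  have value : -(2 * π * Complex.I * u) = u • (-(π * Complex.I) - π * Complex.I) := by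
    rw [zsmul_eq_mul]
    ring
  exact value ▸ hasSum_symmetricIcc_add_sub (tendsto_piCotPi_add_mul_atTop z τ)
    (tendsto_piCotPi_add_mul_atBot z τ) u

lemma hasSum_heckeEisenstein (l : ℕ) [NeZero l] (v : Fin 2 → ℤ) (τ : ℍ) :
    HasSum (fun m : ℤ ↦ l * piCotPi (latticePoint τ v / l + m * τ))
      (heckeEisenstein l v τ - 2 * π * Complex.I * v 0) (symmetricIcc ℤ) := by
  set z := latticePoint τ v / l
  have hcz (m : ℤ) : (l + 1) * z + m * τ = z + (m + v 0 : ℤ) * τ + v 1 := by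
    rw [add_mul, mul_div_cancel₀ _ (NeZero.ne (l : ℂ)), latticePoint]
    push_cast
    ring
  have odd_sum : HasSum (fun m : ℤ ↦ piCotPi (m * τ)) 0 (symmetricIcc ℤ) :=
    hasSum_symmetricIcc_of_odd fun m ↦ by rw [Int.cast_neg, neg_mul, piCotPi_odd]
  have defect_sum : HasSum _ (zetaDefect (l + 1) z τ) (symmetricIcc ℤ) :=
    (hasSum_zetaDefect (l + 1) z τ).mono_left le_atTop
  convert (defect_sum.add (hasSum_piCotPi_add_mul_sub z τ (v 0))).add
    (odd_sum.mul_left (l : ℂ)) using 1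
  · ext m
    rw [hcz, piCotPi_add_intCast]
    ring
  · rw [heckeEisenstein, mul_zero, add_zero, ← sub_eq_add_neg]

lemma heckeEisenstein_add_smul (l : ℕ) [NeZero l] (v k : Fin 2 → ℤ) :
    heckeEisenstein l (v + (l : ℤ) • k) = heckeEisenstein l v := by
  ext τ
  set z := latticePoint τ v / l with hz
  have hlattice (m : ℤ) :
      latticePoint τ (v + (l : ℤ) • k) / l + m * τ = z + (m + k 0 : ℤ) * τ + k 1 := by
    rw [hz, latticePoint, latticePoint]
    have := NeZero.ne (l : ℂ)
    push_cast [Pi.add_apply, Pi.smul_apply, smul_eq_mul]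
    field_simp
    ring
  have shifted := hasSum_heckeEisenstein l (v + (l : ℤ) • k) τ
  have unshifted := (hasSum_heckeEisenstein l v τ).add
    ((hasSum_piCotPi_add_mul_sub z τ (k 0)).mul_left (l : ℂ))
  simp only [hlattice, piCotPi_add_intCast] at shifted
  simp only [← hz, mul_sub, add_sub_cancel] at unshifted
  have := shifted.unique unshifted
  push_cast [Pi.add_apply, Pi.smul_apply, smul_eq_mul] at this
  linear_combination this

lemma hasSum_sign_add_intCast {x : ℝ} (hx : |x| < 1) :
    HasSum (fun m : ℤ ↦ (SignType.sign (x + m) : ℂ)) (SignType.sign x) (symmetricIcc ℤ) := by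
  have sign_odd : HasSum (fun m : ℤ ↦ (SignType.sign (m : ℝ) : ℂ)) 0 (symmetricIcc ℤ) :=
    hasSum_symmetricIcc_of_odd fun m ↦ by simp [Left.sign_neg]
  have correction : HasSum (fun m : ℤ ↦ if m = 0 then (SignType.sign x : ℂ) else 0)
      (SignType.sign x) (symmetricIcc ℤ) := (hasSum_ite_eq 0 _).mono_left le_atTop
  rw [← zero_add (SignType.sign x : ℂ)]
  convert sign_odd.add correction using 2 with m
  obtain ⟨hx₁, hx₂⟩ := abs_lt.mp hx
  rcases lt_trichotomy m 0 with hm | rfl | hm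
  · have : (m : ℝ) ≤ -1 := by exact_mod_cast Int.le_sub_one_of_lt hm
    rw [sign_neg (by linarith), sign_neg (by linarith), if_neg hm.ne, add_zero]
  · simp
  · have : (1 : ℝ) ≤ m := by exact_mod_cast hm
    rw [sign_pos (by linarith), sign_pos (by linarith), if_neg hm.ne', add_zero]

lemma norm_piCotPi_add_sign_le_of_one_le_im (x y : ℝ) {τ : ℍ} (hτ : 1 ≤ τ.im) (m : ℤ) :
    ‖piCotPi (x * τ + y + m * τ) + SignType.sign (x + m) * (π * Complex.I)‖ ≤
      1 / (π * (x + m) ^ 2) + if x + m = 0 then ‖piCotPi y‖ else 0 := by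
  have := Real.pi_pos
  have hpoint : (x * τ + y + m * τ : ℂ) = (x + m : ℝ) * τ + y := by push_cast; ring
  rw [hpoint]
  generalize x + m = t
  rcases eq_or_ne t 0 with rfl | ht
  · simp
  · have him : ((t : ℂ) * τ + y).im = t * τ.im := by simp
    have hsign : SignType.sign (t * τ.im) = SignType.sign t := by
      rw [sign_mul, sign_pos τ.im_pos, mul_one]
    have := norm_piCotPi_add_sign_le (x := t * τ + y) (by simp [him, ht, τ.im_pos.ne'])
    rw [him, hsign] at this
    rw [if_neg ht, add_zero]
    refine this.trans ?_
    rw [mul_pow]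
    gcongr
    exact le_mul_of_one_le_right (sq_nonneg t) (one_le_pow₀ hτ)

lemma summable_sign_error (x b : ℝ) :
    Summable fun m : ℤ ↦ 1 / (π * (x + m) ^ 2) + if x + m = 0 then b else 0 := by
  have inv_sq : Summable fun m : ℤ ↦ 1 / (π * (x + m) ^ 2) := by
    have := ((Real.summable_one_div_int_add_rpow x 2).mpr one_lt_two).mul_left (1 / π)
    refine this.congr fun m ↦ ?_
    rw [Real.rpow_two, sq_abs, one_div_mul_one_div, add_comm]
  refine inv_sq.add (summable_of_hasFiniteSupport ?_)
  refine Set.Subsingleton.finite fun m hm n hn ↦ ?_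
  have hm : x + m = 0 := of_not_not fun h ↦ hm (if_neg h)
  have hn : x + n = 0 := of_not_not fun h ↦ hn (if_neg h)
  exact_mod_cast add_left_cancel (hm.trans hn.symm)

lemma isBoundedAtImInfty_heckeEisenstein_of_lt {l : ℕ} {v : Fin 2 → ℤ} (hv₀ : 0 ≤ v 0)
    (hvl : v 0 < l) : IsBoundedAtImInfty (heckeEisenstein l v) := by
  have hl : (0 : ℝ) < l := by exact_mod_cast hv₀.trans_lt hvl
  have : NeZero l := ⟨by exact_mod_cast hl.ne'⟩
  obtain ⟨x, hx⟩ : ∃ x : ℝ, x = v 0 / l := ⟨_, rfl⟩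
  obtain ⟨y, hy⟩ : ∃ y : ℝ, y = v 1 / l := ⟨_, rfl⟩
  have hx_lt : |x| < 1 := by
    rw [hx, abs_of_nonneg (by positivity), div_lt_one hl]
    exact_mod_cast hvl
  obtain ⟨A, hA⟩ := (summable_sign_error x ‖piCotPi y‖).mul_left (l : ℝ)
  set c : ℂ := -(2 * π * Complex.I * v 0) + l * (SignType.sign x * (π * Complex.I)) with hc
  refine isBoundedAtImInfty_iff.mpr ⟨A + ‖c‖, 1, fun τ hτ ↦ ?_⟩
  have hpoint : latticePoint τ v / l = x * τ + y := by
    rw [hx, hy, latticePoint]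
    push_cast
    ring
  have error_sum := (hasSum_heckeEisenstein l v τ).add
    (((hasSum_sign_add_intCast hx_lt).mul_right (π * Complex.I)).mul_left (l : ℂ))
  simp only [hpoint, ← mul_add] at error_sum
  have hbound : ‖heckeEisenstein l v τ + c‖ ≤ A := by
    rw [hc, ← add_assoc, ← sub_eq_add_neg]
    refine le_of_tendsto_of_tendsto' (Tendsto.norm error_sum) (hA.mono_left le_atTop)
      fun s ↦ norm_sum_le_of_le s fun m _ ↦ ?_
    rw [norm_mul, norm_natCast]
    gcongr
    exact norm_piCotPi_add_sign_le_of_one_le_im x y hτ m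
  exact (norm_le_add_norm_add _ c).trans (by gcongr)

lemma isBoundedAtImInfty_heckeEisenstein (l : ℕ) [NeZero l] (v : Fin 2 → ℤ) :
    IsBoundedAtImInfty (heckeEisenstein l v) := by
  have hl : (0 : ℤ) < l := by exact_mod_cast NeZero.pos l
  have reduced : v = ![v 0 % l, v 1] + (l : ℤ) • ![v 0 / l, 0] := by
    ext i
    fin_cases i <;> simp [Int.emod_add_mul_ediv]
  rw [reduced, heckeEisenstein_add_smul]
  exact isBoundedAtImInfty_heckeEisenstein_of_lt (Int.emod_nonneg _ hl.ne')
    (Int.emod_lt_of_pos _ hl)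

lemma isBoundedAt_heckeEisenstein (l : ℕ) [NeZero l] (v : Fin 2 → ℤ) {c : OnePoint ℝ}
    (hc : IsCusp c 𝒮ℒ) : c.IsBoundedAt (heckeEisenstein l v) 1 :=
  (OnePoint.isBoundedAt_iff_forall_SL2Z hc).mpr fun γ _ ↦ by
    rw [heckeEisenstein_slash]
    exact isBoundedAtImInfty_heckeEisenstein l _

end HeckeEisenstein

section LambertSeries

lemma tsum_prod_pnat_eq_tsum_sum_divisors {M : Type*} [AddCommGroup M] [UniformSpace M]
    [IsUniformAddGroup M] [CompleteSpace M] [T2Space M] {F : ℕ → ℕ → M}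
    (hF : Summable fun c : ℕ+ × ℕ+ ↦ F c.1 c.2) :
    ∑' c : ℕ+ × ℕ+, F c.1 c.2 = ∑' n : ℕ+, ∑ d ∈ (n : ℕ).divisors, F d (n / d) := by
  rw [← sigmaAntidiagonalEquivProd.tsum_eq]
  refine (sigmaAntidiagonalEquivProd.summable_iff.mpr hF).tsum_sigma.trans (tsum_congr fun n ↦ ?_)
  rw [← Nat.sum_divisorsAntidiagonal F]
  exact Finset.tsum_subtype (n : ℕ).divisorsAntidiagonal fun p ↦ F p.1 p.2

lemma tsum_pnat_pow_eq {q : ℂ} (hq : ‖q‖ < 1) : ∑' m : ℕ+, q ^ (m : ℕ) = q / (1 - q) := by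
  rw [tsum_pnat_eq_tsum_succ (f := (q ^ ·)), div_eq_mul_inv, ← tsum_geometric_of_norm_lt_one hq,
    ← tsum_mul_left]
  simp only [pow_succ']

lemma tsum_pnat_eq_tsum_of_apply_zero {f : ℕ → ℂ} (hf : f 0 = 0) :
    ∑' n : ℕ+, f n = ∑' n : ℕ, f n :=
  PNat.coe_injective.tsum_eq fun n hn ↦
    ⟨⟨n, Nat.pos_of_ne_zero fun h ↦ hn (h ▸ hf)⟩, rfl⟩

lemma tsum_mul_div_one_sub_pow_eq_tsum_sum_divisors {χ : ℕ → ℂ} {C : ℝ} (hχ : ∀ d, ‖χ d‖ ≤ C)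
    {q : ℂ} (hq : ‖q‖ < 1) :
    ∑' d : ℕ, χ d * (q ^ d / (1 - q ^ d)) = ∑' n : ℕ, q ^ n * ∑ d ∈ n.divisors, χ d := by
  have double_summable : Summable fun c : ℕ+ × ℕ+ ↦ χ c.1 * q ^ (c.1 * c.2 : ℕ) := by
    refine ((summable_prod_mul_pow 0 hq).norm.mul_left C).of_norm_bounded fun c ↦ ?_
    rw [norm_mul, pow_zero, one_mul]
    gcongr
    exact hχ c.1
  have row (d : ℕ+) : ∑' m : ℕ+, χ d * q ^ (d * m : ℕ) =
      χ d * (q ^ (d : ℕ) / (1 - q ^ (d : ℕ))) := by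
    simp only [pow_mul]
    rw [tsum_mul_left, tsum_pnat_pow_eq ((norm_pow q d).trans_lt
      (pow_lt_one₀ (norm_nonneg q) hq d.ne_zero))]
  have fiber (n : ℕ) :
      ∑ d ∈ n.divisors, χ d * q ^ (d * (n / d)) = q ^ n * ∑ d ∈ n.divisors, χ d := by
    rw [Finset.mul_sum]
    refine Finset.sum_congr rfl fun d hd ↦ ?_
    rw [Nat.mul_div_cancel' (Nat.dvd_of_mem_divisors hd), mul_comm]
  calc ∑' d : ℕ, χ d * (q ^ d / (1 - q ^ d))
      = ∑' d : ℕ+, χ d * (q ^ (d : ℕ) / (1 - q ^ (d : ℕ))) :=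
        (tsum_pnat_eq_tsum_of_apply_zero (by simp)).symm
    _ = ∑' c : ℕ+ × ℕ+, χ c.1 * q ^ (c.1 * c.2 : ℕ) := by
        rw [double_summable.tsum_prod]
        exact tsum_congr fun d ↦ (row d).symm
    _ = ∑' n : ℕ+, q ^ (n : ℕ) * ∑ d ∈ (n : ℕ).divisors, χ d := by
        rw [tsum_prod_pnat_eq_tsum_sum_divisors (F := fun d m ↦ χ d * q ^ (d * m)) double_summable]
        simp only [fiber]
    _ = ∑' n : ℕ, q ^ n * ∑ d ∈ n.divisors, χ d :=
        tsum_pnat_eq_tsum_of_apply_zero (f := fun n ↦ q ^ n * ∑ d ∈ n.divisors, χ d) (by simp)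

end LambertSeries

section FourierExpansion

lemma piCotPi_natCast_mul {n : ℕ} (hn : n ≠ 0) (τ : ℍ) :
    piCotPi (n * τ) = -(π * Complex.I) - 2 * π * Complex.I *
      (cexp (2 * π * Complex.I * τ) ^ n / (1 - cexp (2 * π * Complex.I * τ) ^ n)) := by
  rw [piCotPi_eq (by simp [hn, τ.im_pos.ne']), ← exp_nat_mul, mul_left_comm]

lemma piCotPi_intCast_mul (n : ℤ) (τ : ℍ) :
    piCotPi (n * τ) = -(π * Complex.I) * n.sign - 2 * π * Complex.I *
      (n.sign * (cexp (2 * π * Complex.I * τ) ^ n.natAbs /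
        (1 - cexp (2 * π * Complex.I * τ) ^ n.natAbs))) := by
  obtain ⟨k, rfl | rfl⟩ := n.eq_nat_or_neg <;> rcases eq_or_ne k 0 with rfl | hk
  · simp [piCotPi_zero]
  · simp [piCotPi_natCast_mul hk, Int.sign_natCast_of_ne_zero hk]
  · simp [piCotPi_zero]
  · simp only [Int.cast_neg, Int.cast_natCast, neg_mul, piCotPi_odd _, piCotPi_natCast_mul hk,
      Int.sign_neg, Int.sign_natCast_of_ne_zero hk, Int.natAbs_neg, Int.natAbs_natCast]
    push_cast
    ring

/-- The coefficient `δ_{d ≡ a mod m} - δ_{d ≡ -a mod m}` in the definition of `s_{a,m}`. -/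
noncomputable def residueSign (m : ℕ) (a d : ℤ) : ℂ :=
  (if (d : ZMod m) = a then 1 else 0) - if (d : ZMod m) = -a then 1 else 0

lemma norm_residueSign_le (m : ℕ) (a d : ℤ) : ‖residueSign m a d‖ ≤ 1 := by
  unfold residueSign
  split_ifs <;> simp

lemma sE_eq_tsum {m : ℕ} {a : ℤ} (ha : (a : ZMod m) ≠ 0) (τ : ℍ) :
    sE m a τ = ((1 / 2 - Int.fract (a / m : ℝ) : ℝ) : ℂ) +
      ∑' n : ℕ, cexp (2 * π * Complex.I * τ) ^ n * ∑ d ∈ n.divisors, residueSign m a d := by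
  have hexp (n : ℕ) : cexp (2 * π * Complex.I * n * τ) = cexp (2 * π * Complex.I * τ) ^ n := by
    rw [← exp_nat_mul]
    ring_nf
  simp only [sE, if_neg ha, hexp, residueSign]

lemma hasSum_sign_mul_natAbs_arithmeticProgression (l : ℕ) [NeZero l] (a : ℤ) {g : ℕ → ℂ}
    (hg : Summable g) :
    HasSum (fun m : ℤ ↦ ((a + l * m).sign : ℂ) * g (a + l * m).natAbs)
      (∑' d : ℕ, residueSign l a d * g d) := by
  have hl := NeZero.ne l
  set h : ℤ → ℂ := fun n ↦ if (n : ZMod l) = a then n.sign * g n.natAbs else 0 with hh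
  have h_summable : Summable h := by
    have : Summable fun n : ℤ ↦ g n.natAbs := by
      simpa [summable_int_iff_summable_nat_and_neg] using hg
    refine this.norm.of_norm_bounded fun n ↦ ?_
    rcases n.sign_trichotomy with hn | hn | hn <;> by_cases hna : (n : ZMod l) = a <;>
      simp [hh, hn, hna]
  have folded : HasSum (fun d : ℕ ↦ residueSign l a d * g d) (∑' n, h n) := by
    convert h_summable.hasSum.nat_add_neg using 1
    · ext d
      rcases eq_or_ne d 0 with rfl | hd
      · simp [hh, residueSign, eq_comm]
      · simp only [hh, residueSign, Int.sign_neg, Int.sign_natCast_of_ne_zero hd, Int.natAbs_neg,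
          Int.natAbs_natCast, Int.cast_neg, Int.cast_one, Int.cast_natCast, neg_eq_iff_eq_neg]
        split_ifs <;> ring
    · simp [hh]
  have progression_injective : Function.Injective fun m : ℤ ↦ a + l * m := fun m n hmn ↦ by
    simpa [hl] using hmn
  rw [folded.tsum_eq]
  convert (progression_injective.hasSum_iff fun n hn ↦ if_neg fun hna ↦ hn ?_).mpr
    h_summable.hasSum using 1
  · ext m
    simp
  · obtain ⟨m, hm⟩ := (ZMod.intCast_eq_intCast_iff_dvd_sub a n l).mp hna.symm
    exact ⟨m, by simp [← hm]⟩

lemma hasSum_sign_arithmeticProgression {l : ℕ} {a : ℤ} (ha₀ : 0 < a) (hal : a < l) :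
    HasSum (fun m : ℤ ↦ ((a + l * m).sign : ℂ)) 1 (symmetricIcc ℤ) := by
  have hl : (0 : ℝ) < l := by exact_mod_cast ha₀.trans hal
  have : (0 : ℝ) < a := by exact_mod_cast ha₀
  have hx : |(a / l : ℝ)| < 1 := by
    rw [abs_of_pos (by positivity), div_lt_one hl]
    exact_mod_cast hal
  have := hasSum_sign_add_intCast hx
  rw [sign_pos (by positivity)] at this
  convert this using 2 with m
  · have hscale : ((a + l * m : ℤ) : ℝ) = l * (a / l + m) := by
      push_cast
      field_simp
    have hsign := congrArg SignType.sign hscale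
    rw [sign_mul, sign_pos hl, one_mul, sign_intCast] at hsign
    rw [Int.sign_eq_sign, hsign]
    simp
  · simp

lemma summable_pow_div_one_sub_pow {q : ℂ} (hq : ‖q‖ < 1) :
    Summable fun n : ℕ ↦ q ^ n / (1 - q ^ n) := by
  simpa using summable_norm_pow_mul_geometric_div_one_sub 0 hq

lemma heckeEisenstein_eq_lambertSeries {l : ℕ} {a : ℤ} (ha₀ : 0 < a) (hal : a < l) {σ τ : ℍ}
    (hσ : (σ : ℂ) = l * τ) :
    heckeEisenstein l ![a, 0] σ = -(2 * π * Complex.I * l) * (1 / 2 - a / l +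
      ∑' d : ℕ, residueSign l a d * (cexp (2 * π * Complex.I * τ) ^ d /
        (1 - cexp (2 * π * Complex.I * τ) ^ d))) := by
  have : NeZero l := ⟨by rintro rfl; lia⟩
  have hl := NeZero.ne (l : ℂ)
  have hpoint (m : ℤ) :
      latticePoint σ ![a, 0] / l + m * σ = ((a + l * m : ℤ) : ℂ) * τ := by
    simp only [latticePoint, hσ, Matrix.cons_val_zero, Matrix.cons_val_one, Matrix.cons_val_fin_one]
    push_cast
    field_simp
    ring
  have row_sum := hasSum_heckeEisenstein l ![a, 0] σ
  simp only [hpoint, piCotPi_intCast_mul] at row_sum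
  have sign_sum := (hasSum_sign_arithmeticProgression ha₀ hal).mul_left (-(π * Complex.I))
  have lambert_sum : HasSum _ _ (symmetricIcc ℤ) :=
    (hasSum_sign_mul_natAbs_arithmeticProgression l a (summable_pow_div_one_sub_pow
      (norm_exp_two_pi_I_lt_one τ))).mono_left le_atTop
  have := row_sum.unique <|
    (sign_sum.sub (lambert_sum.mul_left (2 * π * Complex.I))).mul_left (l : ℂ)
  rw [sub_eq_iff_eq_add] at this
  rw [this, Matrix.cons_val_zero]
  field_simp
  ring

lemma sE_eq_tsum_lambertSeries {m : ℕ} {a : ℤ} (ha : (a : ZMod m) ≠ 0) (τ : ℍ) :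
    sE m a τ = ((1 / 2 - Int.fract (a / m : ℝ) : ℝ) : ℂ) +
      ∑' d : ℕ, residueSign m a d * (cexp (2 * π * Complex.I * τ) ^ d /
        (1 - cexp (2 * π * Complex.I * τ) ^ d)) := by
  rw [sE_eq_tsum ha, tsum_mul_div_one_sub_pow_eq_tsum_sum_divisors
    (fun d ↦ norm_residueSign_le m a d) (norm_exp_two_pi_I_lt_one τ)]

lemma heckeEisenstein_eq_mul_sE {l : ℕ} [NeZero l] {a : ℤ} (ha : (a : ZMod l) ≠ 0) {σ τ : ℍ}
    (hσ : (σ : ℂ) = l * τ) :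
    heckeEisenstein l ![a, 0] σ = -(2 * π * Complex.I * l) * sE l a τ := by
  have hl : (0 : ℤ) < l := by exact_mod_cast NeZero.pos l
  have hmod : ((a % l : ℤ) : ZMod l) = a := by simp
  have hpos : 0 < a % l := (Int.emod_nonneg a hl.ne').lt_of_ne fun h ↦ ha (by simp [← hmod, ← h])
  have reduced : ![a, 0] = ![a % l, 0] + (l : ℤ) • ![a / l, 0] := by
    ext i
    fin_cases i <;> simp [Int.emod_add_mul_ediv]
  rw [reduced, heckeEisenstein_add_smul, sE_eq_tsum_lambertSeries ha,
    heckeEisenstein_eq_lambertSeries hpos (Int.emod_lt_of_pos a hl) hσ,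
    Int.fract_div_intCast_eq_div_intCast_mod]
  simp only [residueSign, hmod]
  push_cast
  rfl

end FourierExpansion

section Scaling

/-- The matrix `diag(l, 1)` acting on `ℍ` as `τ ↦ l * τ`. It is defined over `ℚ`, and not directly
over `ℝ`, because rational matrices permute the cusps of `SL(2, ℤ)`. -/
def diagScaling (l : ℕ) [NeZero l] : GL (Fin 2) ℚ :=
  .mkOfDetNeZero !![(l : ℚ), 0; 0, 1] (by simp [NeZero.ne l])

lemma coe_diagScaling (l : ℕ) [NeZero l] :
    (diagScaling l : Matrix (Fin 2) (Fin 2) ℚ) = !![(l : ℚ), 0; 0, 1] := rfl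

lemma det_diagScaling (l : ℕ) [NeZero l] :
    ((diagScaling l).map (Rat.castHom ℝ)).det.val = l := by
  simp [Matrix.det_fin_two, coe_diagScaling]

lemma coe_diagScaling_smul (l : ℕ) [NeZero l] (τ : ℍ) :
    ((diagScaling l).map (Rat.castHom ℝ) • τ : ℍ) = (l * τ : ℂ) := by
  rw [coe_smul_of_det_pos (by rw [det_diagScaling]; exact_mod_cast NeZero.pos l)]
  simp [num, denom, coe_diagScaling]

lemma slash_diagScaling_apply (l : ℕ) [NeZero l] (f : ℍ → ℂ) (τ : ℍ) :
    (f ∣[(1 : ℤ)] (diagScaling l).map (Rat.castHom ℝ)) τ =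
      f ((diagScaling l).map (Rat.castHom ℝ) • τ) := by
  have hdet : (0 : ℝ) < ((diagScaling l).map (Rat.castHom ℝ)).det.val := by
    rw [det_diagScaling]
    exact_mod_cast NeZero.pos l
  rw [ModularForm.slash_apply, σ, if_pos hdet]
  simp [denom, coe_diagScaling]

lemma sE_eq_smul_heckeEisenstein_slash {l : ℕ} [NeZero l] {a : ℤ} (ha : (a : ZMod l) ≠ 0) :
    sE l a = (-(2 * π * Complex.I * l))⁻¹ •
      heckeEisenstein l ![a, 0] ∣[(1 : ℤ)] (diagScaling l).map (Rat.castHom ℝ) := by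
  have hκ : -(2 * π * Complex.I * l) ≠ 0 := by simp [Real.pi_ne_zero, NeZero.ne l]
  ext τ
  rw [Pi.smul_apply, slash_diagScaling_apply,
    heckeEisenstein_eq_mul_sE ha (coe_diagScaling_smul l τ), smul_eq_mul, inv_mul_cancel_left₀ hκ]

lemma isCusp_map_ratCast_smul {c : OnePoint ℝ} (hc : IsCusp c 𝒮ℒ) (g : GL (Fin 2) ℚ) :
    IsCusp (g.map (Rat.castHom ℝ) • c) 𝒮ℒ := by
  obtain ⟨c, rfl⟩ := isCusp_SL2Z_iff.mp hc
  exact isCusp_SL2Z_iff.mpr ⟨g • c, OnePoint.map_smul (Rat.castHom ℝ) g c⟩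

lemma isBoundedAt_sE {l : ℕ} [NeZero l] {a : ℤ} (ha : (a : ZMod l) ≠ 0) {c : OnePoint ℝ}
    (hc : IsCusp c 𝒮ℒ) : c.IsBoundedAt (sE l a) 1 := by
  have hb := OnePoint.IsBoundedAt.smul_iff.mp
    (isBoundedAt_heckeEisenstein l ![a, 0] (isCusp_map_ratCast_smul hc (diagScaling l)))
  intro g hg
  rw [sE_eq_smul_heckeEisenstein_slash ha, ModularForm.smul_slash]
  exact (hb g hg).const_smul_left _

lemma exists_diagScaling_mul_eq_mul_diagScaling {l : ℕ} [NeZero l] {γ : SL(2, ℤ)}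
    (hγ : (l : ℤ) ∣ γ 1 0) : ∃ γ' : SL(2, ℤ), γ' 0 0 = γ 0 0 ∧ γ' 0 1 = l * γ 0 1 ∧
      (diagScaling l).map (Rat.castHom ℝ) * (γ : GL (Fin 2) ℝ) =
        (γ' : GL (Fin 2) ℝ) * (diagScaling l).map (Rat.castHom ℝ) := by
  obtain ⟨r, hr⟩ := hγ
  have hdet : !![γ 0 0, l * γ 0 1; r, γ 1 1].det = 1 := by
    have hγ := γ.det_coe
    rw [Matrix.det_fin_two, hr] at hγ
    rw [Matrix.det_fin_two_of]
    linear_combination hγ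
  obtain ⟨γ', hγ'⟩ : ∃ γ' : SL(2, ℤ), γ'.val = !![γ 0 0, l * γ 0 1; r, γ 1 1] := ⟨⟨_, hdet⟩, rfl⟩
  refine ⟨γ', by simp [hγ'], by simp [hγ'], ?_⟩
  ext i j
  fin_cases i <;> fin_cases j <;>
    simp [Matrix.mul_apply, coe_diagScaling, hγ', hr, mul_comm]

lemma sE_slash_of_mem_Gamma1 {l : ℕ} [NeZero l] {a : ℤ} (ha : (a : ZMod l) ≠ 0)
    {γ : SL(2, ℤ)} (hγ : γ ∈ CongruenceSubgroup.Gamma1 l) :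
    sE l a ∣[(1 : ℤ)] (γ : GL (Fin 2) ℝ) = sE l a := by
  obtain ⟨hp, -, hr⟩ := (CongruenceSubgroup.Gamma1_mem l γ).mp hγ
  obtain ⟨p, hp⟩ : ∃ p, γ 0 0 = 1 + l * p := by
    obtain ⟨p, hp⟩ := (ZMod.intCast_eq_intCast_iff_dvd_sub 1 (γ 0 0) l).mp (by simpa using hp.symm)
    exact ⟨p, by rw [← hp, add_sub_cancel]⟩
  obtain ⟨γ', h₀₀, h₀₁, hcomm⟩ := exists_diagScaling_mul_eq_mul_diagScaling
    ((ZMod.intCast_zmod_eq_zero_iff_dvd _ _).mp hr)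
  have hvec : Matrix.vecMul ![a, 0] γ' = ![a, 0] + (l : ℤ) • ![a * p, a * γ 0 1] := by
    ext i
    fin_cases i <;> simp [Matrix.vecMul_eq_sum, h₀₀, h₀₁, hp, mul_add, mul_left_comm]
  rw [sE_eq_smul_heckeEisenstein_slash ha, ← ModularForm.SL_slash, ModularForm.SL_smul_slash,
    ModularForm.SL_slash, ← SlashAction.slash_mul, hcomm, SlashAction.slash_mul,
    ← ModularForm.SL_slash, heckeEisenstein_slash, hvec, heckeEisenstein_add_smul]

end Scaling

section Holomorphy

lemma differentiableOn_tsum_cexp_pow_mul {c : ℕ → ℂ} {k : ℕ}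
    (hc : c =O[atTop] fun n ↦ (n ^ k : ℝ)) :
    DifferentiableOn ℂ (fun z ↦ ∑' n, cexp (2 * π * Complex.I * z) ^ n * c n)
      upperHalfPlaneSet := by
  have := (summableLocallyUniformlyOn_iteratedDerivWithin_smul_cexp 0 k one_pos hc).differentiableOn
    isOpen_upperHalfPlaneSet fun _ _ _ ↦ by
      simp only [iteratedDerivWithin_zero]
      fun_prop
  simpa [mul_comm] using this

lemma mdifferentiable_sE {m : ℕ} {a : ℤ} (ha : (a : ZMod m) ≠ 0) : MDiff (sE m a) := by
  have coeff_bound : (fun n : ℕ ↦ ∑ d ∈ n.divisors, residueSign m a d) =O[atTop]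
      fun n ↦ (n ^ 1 : ℝ) := by
    refine .of_norm_le fun n ↦ ?_
    calc ‖∑ d ∈ n.divisors, residueSign m a d‖
        ≤ ∑ _d ∈ n.divisors, (1 : ℝ) := norm_sum_le_of_le _ fun _ _ ↦ norm_residueSign_le m a _
      _ ≤ n ^ 1 := by simpa using Nat.card_divisors_le_self n
  refine mdifferentiable_iff.mpr (((differentiableOn_tsum_cexp_pow_mul coeff_bound).const_add
    ((1 / 2 - Int.fract (a / m : ℝ) : ℝ) : ℂ)).congr fun z hz ↦ ?_)
  rw [Function.comp_apply, sE_eq_tsum ha, ofComplex_apply_of_im_pos hz]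

end Holomorphy

theorem stmt11 (l : ℕ) (hl : 1 < l) (a : ℤ) (ha : (a : ZMod l) ≠ 0) :
    ∃ F : ModularForm (CongruenceSubgroup.Gamma1 l) 1, ∀ τ : ℍ, F τ = sE l a τ := by
  have : NeZero l := ⟨(zero_lt_one.trans hl).ne'⟩
  refine ⟨{ toFun := sE l a
            slash_action_eq' := ?_
            holo' := mdifferentiable_sE ha
            bdd_at_cusps' := ?_ }, fun τ ↦ rfl⟩
  · rintro _ ⟨γ, hγ, rfl⟩
    exact sE_slash_of_mem_Gamma1 ha hγ
  · intro c hc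
    exact isBoundedAt_sE ha (Subgroup.IsArithmetic.isCusp_iff_isCusp_SL2Z _ |>.mp hc)
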